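/- Let d ≥ 2 be an integer. Suppose ξ = (ξ₁,…,ξ_d) ∈ ℝ^d is totally irrational and ξ₁² + ⋯ + ξ_d² = 1. Then the uniform Diophantine exponent of ξ satisfies ω̂(ξ) ≤ H_{d−1}, where H_{d−1} is the unique positive root of the equation x^d + x^{d−1} + ⋯ + x = 1. -/

import Mathlib

open Filter

/-- The "uniform approximation at exponent `γ`" property: for every sufficiently large
real `Q`, the system `max_j |q θ_j - a_j| < Q^(-γ)`, `1 ≤ q ≤ Q` has an integer solution.
The uniform Diophantine exponent `ω̂(θ)` is the supremum of such `γ`. -/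
def UnifApprox {m : ℕ} (θ : Fin m → ℝ) (γ : ℝ) : Prop :=
  ∀ᶠ Q : ℝ in atTop, ∃ (q : ℤ) (a : Fin m → ℤ),
    1 ≤ q ∧ (q : ℝ) ≤ Q ∧ ∀ j, |(q : ℝ) * θ j - (a j : ℝ)| < Q ^ (-γ)

/-- `1, θ₁, …, θ_m` are linearly independent over `ℚ`. -/
def TotallyIrrational {m : ℕ} (θ : Fin m → ℝ) : Prop :=
  LinearIndependent ℚ (Fin.cons (1 : ℝ) θ)

/-!
Suppose `ξ` admits uniform approximation with an exponent above `H`, hence with some `α` slightly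
above `H`, and `α > 1/2`. Let `x n` be the best approximations to `ξ`, with denominators `q n` and
errors `δ n ≤ q (n + 1) ^ (-α)`.

If `x (n + 1)` lies on the cone over the sphere, the sum of the squares of the `2 × 2` minors of
`x n` and `x (n + 1)` involving the denominators is a positive multiple of `q (n + 1)`, so that
`q (n + 1) * δ n ^ 2 ≫ 1`; for large `n` this contradicts `α > 1/2`. Off the cone, the sphere form
takes a nonzero integer value at `x n`, so `q n * δ n ≫ 1` and thus `q (n + 1) ^ α ≪ q n`.

Total irrationality makes the points `x n` with `n ≥ N` span `ℚ ^ (d + 1)`. Select the `d + 1`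
indices `e 0 < ⋯ < e d` at which they leave the span of their predecessors. Eliminating the first
column of the matrix with rows `x (e k)` by means of the rows `x (e k - 1)`, which for `k ≥ 1` lie
in the span of the earlier selected rows, gives
`∏ k ≥ 1, q (e k - 1) ≪ q (e 0) * ∏ k ≥ 1, q (e k) ^ (1 - α)`.
Feeding in `q (e k) ^ α ≪ q (e k - 1)` yields `1 ≪ q (e d) ^ (1 - (α + ⋯ + α ^ d))`, which fails for
large `N` since `α + ⋯ + α ^ d > 1`.
-/

section SpanJumps

variable (K : Type*) {V : Type*} [DivisionRing K] [AddCommGroup V] [Module K V] (x : ℕ → V)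

/-- The indices at which a sequence leaves the span of its earlier terms. -/
def spanJumps : Set ℕ := {m | x m ∉ Submodule.span K (x '' Set.Iio m)}

lemma span_image_spanJumps_inter_Iio (m : ℕ) :
    Submodule.span K (x '' (spanJumps K x ∩ Set.Iio m)) = Submodule.span K (x '' Set.Iio m) := by
  induction m with
  | zero => simp
  | succ m ih =>
    rw [← Order.succ_eq_add_one, Order.Iio_succ_eq_insert]
    by_cases hm : m ∈ spanJumps K x
    · rw [Set.inter_insert_of_mem hm, Set.image_insert_eq, Set.image_insert_eq,
        Submodule.span_insert, Submodule.span_insert, ih]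
    · rw [Set.inter_insert_of_notMem hm, ih, Set.image_insert_eq,
        Submodule.span_insert_eq_span (not_not.mp hm)]

lemma linearIndepOn_spanJumps_inter_Iio (m : ℕ) :
    LinearIndepOn K x (spanJumps K x ∩ Set.Iio m) := by
  induction m with
  | zero => simp
  | succ m ih =>
    rw [← Order.succ_eq_add_one, Order.Iio_succ_eq_insert]
    by_cases hm : m ∈ spanJumps K x
    · rw [Set.inter_insert_of_mem hm]
      refine ih.insert ?_
      rwa [span_image_spanJumps_inter_Iio]
    · rwa [Set.inter_insert_of_notMem hm]

lemma linearIndepOn_spanJumps : LinearIndepOn K x (spanJumps K x) := by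
  have hunion : ⋃ m, spanJumps K x ∩ Set.Iio m = spanJumps K x := by
    rw [← Set.inter_iUnion, Set.iUnion_Iio, Set.inter_univ]
  rw [← hunion]
  refine linearIndepOn_iUnion_of_directed (Monotone.directed_le fun m n hmn => ?_)
    (linearIndepOn_spanJumps_inter_Iio K x)
  exact Set.inter_subset_inter_right _ (Set.Iio_subset_Iio hmn)

lemma span_image_spanJumps :
    Submodule.span K (x '' spanJumps K x) = Submodule.span K (Set.range x) := by
  refine le_antisymm (Submodule.span_mono (Set.image_subset_range _ _)) (Submodule.span_le.mpr ?_)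
  rintro _ ⟨m, rfl⟩
  have hm : x m ∈ Submodule.span K (x '' Set.Iio (m + 1)) :=
    Submodule.subset_span (Set.mem_image_of_mem x m.lt_succ_self)
  rw [← span_image_spanJumps_inter_Iio] at hm
  exact Submodule.span_mono (Set.image_mono Set.inter_subset_left) hm

variable {K x}

lemma spanJumps_finite_and_ncard_eq_finrank [Module.Finite K V]
    (hspan : Submodule.span K (Set.range x) = ⊤) :
    (spanJumps K x).Finite ∧ (spanJumps K x).ncard = Module.finrank K V := by
  let b : Module.Basis (spanJumps K x) K V := .mk (linearIndepOn_spanJumps K x) <| by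
    rw [← Set.image_eq_range, span_image_spanJumps, hspan]
  exact ⟨Module.Finite.finite_basis b, (Module.finrank_eq_nat_card_basis b).symm⟩

lemma exists_strictMono_linearIndependent_forall_lt_mem_span [Module.Finite K V] {r : ℕ}
    (hr : Module.finrank K V = r) (hspan : Submodule.span K (Set.range x) = ⊤) :
    ∃ e : Fin r → ℕ, StrictMono e ∧ LinearIndependent K (x ∘ e) ∧
      ∀ k, ∀ m < e k, x m ∈ Submodule.span K (x ∘ e '' Set.Iio k) := by
  obtain ⟨hfin, hcard⟩ := spanJumps_finite_and_ncard_eq_finrank hspan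
  obtain ⟨e, range_e⟩ : ∃ e : Fin r ↪o ℕ, Set.range e = spanJumps K x :=
    ⟨hfin.toFinset.orderEmbOfFin (by rw [← Set.ncard_eq_toFinset_card _ hfin, hcard, hr]), by simp⟩
  have e_mem (k : Fin r) : e k ∈ spanJumps K x := range_e ▸ Set.mem_range_self k
  refine ⟨e, e.strictMono, (linearIndepOn_spanJumps K x).comp (fun k => ⟨e k, e_mem k⟩)
    fun i j hij => e.injective (congrArg Subtype.val hij), fun k m hm => ?_⟩
  have hmem : x m ∈ Submodule.span K (x '' Set.Iio (e k)) :=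
    Submodule.subset_span (Set.mem_image_of_mem x hm)
  rw [← span_image_spanJumps_inter_Iio, ← range_e] at hmem
  refine Submodule.span_mono ?_ hmem
  rintro _ ⟨_, ⟨⟨i, rfl⟩, hik⟩, rfl⟩
  exact ⟨i, e.lt_iff_lt.mp hik, rfl⟩

end SpanJumps

section Determinants

variable {R : Type*} [CommRing R]

lemma det_eq_prod_mul_det_of_smul_sub_mem_span {n : Type*} [Fintype n] [LinearOrder n]
    (y z : n → n → R) (c : n → R)
    (h : ∀ k, c k • y k - z k ∈ Submodule.span R (y '' Set.Iio k)) :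
    (Matrix.of z).det = (∏ k, c k) * (Matrix.of y).det := by
  have hcomb (k : n) : ∃ l : n → R, ∑ i with i < k, l i • y i = c k • y k - z k := by
    rw [← Submodule.mem_span_image_finset_iff_exists_fun']
    simpa [Set.Iio] using h k
  choose l hl using hcomb
  let T : Matrix n n R := Matrix.diagonal c - Matrix.of fun k i => if i < k then l k i else 0
  have hz : Matrix.of z = T * Matrix.of y := by
    ext k j
    have hkj := congrFun (hl k) j
    simp only [Finset.sum_apply, Pi.smul_apply, smul_eq_mul, Pi.sub_apply,
      Finset.sum_filter] at hkj
    rw [Matrix.sub_mul, Matrix.sub_apply, Matrix.diagonal_mul, Matrix.mul_apply]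
    simp [hkj]
  have hT : T.det = ∏ k, c k := by
    rw [Matrix.det_of_isLowerTriangular]
    · simp [T]
    · intro i j hij
      have hij : i < j := hij
      simp [T, hij.ne, hij.not_gt]
  rw [hz, Matrix.det_mul, hT]

lemma det_eq_mul_det_submatrix_succ {d : ℕ} (A : Matrix (Fin (d + 1)) (Fin (d + 1)) R)
    (h : ∀ k : Fin d, A k.succ 0 = 0) :
    A.det = A 0 0 * (A.submatrix Fin.succ Fin.succ).det := by
  simp [Matrix.det_succ_column_zero, Fin.sum_univ_succ, h, Fin.succAbove_zero]

lemma abs_det_le_factorial_mul_prod [LinearOrder R] [IsStrictOrderedRing R] {n : Type*} [Fintype n]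
    [DecidableEq n] {A : Matrix n n R} {E : n → R} (h : ∀ i j, |A i j| ≤ E i) :
    |A.det| ≤ (Fintype.card n).factorial * ∏ i, E i :=
  calc |A.det| = |∑ σ : Equiv.Perm n, Equiv.Perm.sign σ • ∏ i, A i (σ i)| := by
        rw [← Matrix.det_transpose, Matrix.det_apply]; rfl
    _ ≤ ∑ σ : Equiv.Perm n, |Equiv.Perm.sign σ • ∏ i, A i (σ i)| := Finset.abs_sum_le_sum_abs _ _
    _ = ∑ σ : Equiv.Perm n, ∏ i, |A i (σ i)| :=
        Finset.sum_congr rfl fun σ _ => by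
          rw [← Finset.abs_prod]
          exact AbsoluteValue.abs.map_units_int_smul _ _
    _ ≤ ∑ _σ : Equiv.Perm n, ∏ i, E i := by gcongr; exact h _ _
    _ = (Fintype.card n).factorial * ∏ i, E i := by simp [Fintype.card_perm]

lemma one_le_abs_det_of_linearIndependent_rat {n : Type*} [Fintype n] [DecidableEq n]
    {X : Matrix n n ℤ} (hX : LinearIndependent ℚ fun k i => (X k i : ℚ)) : 1 ≤ |X.det| := by
  have hunit : IsUnit (X.map (Int.cast : ℤ → ℚ)) := Matrix.linearIndependent_rows_iff_isUnit.mp hX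
  have hdet := ((Matrix.isUnit_iff_isUnit_det _).mp hunit).ne_zero
  rw [← Int.cast_det] at hdet
  exact Int.one_le_abs (Int.cast_ne_zero.mp hdet)

/-- The `2 × 2` minors of the rows `x`, `y` that involve the zeroth column. -/
def leadingMinor {d : ℕ} (x y : Fin (d + 1) → R) : Fin d → R :=
  fun i => x 0 * y i.succ - y 0 * x i.succ

lemma prod_mul_det_eq_mul_det_leadingMinor {d : ℕ} (y : Fin (d + 1) → Fin (d + 1) → R)
    (w : Fin d → Fin (d + 1) → R)
    (hw : ∀ k, w k ∈ Submodule.span R (y '' Set.Iio k.succ)) :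
    (∏ k, w k 0) * (Matrix.of y).det =
      y 0 0 * (Matrix.of fun k => leadingMinor (w k) (y k.succ)).det := by
  let z : Fin (d + 1) → Fin (d + 1) → R :=
    Fin.cons (y 0) fun k => w k 0 • y k.succ - y k.succ 0 • w k
  have hdet : (Matrix.of z).det =
      (∏ k, (Fin.cons 1 fun k => w k 0 : Fin (d + 1) → R) k) * (Matrix.of y).det := by
    refine det_eq_prod_mul_det_of_smul_sub_mem_span y z _ fun k => ?_
    induction k using Fin.cases with
    | zero => simp [z]
    | succ k => simpa [z] using Submodule.smul_mem _ (y k.succ 0) (hw k)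
  have hcol (k : Fin d) : Matrix.of z k.succ 0 = 0 := by simp [z, mul_comm]
  rw [Fin.prod_univ_succ] at hdet
  simp only [Fin.cons_zero, Fin.cons_succ, one_mul] at hdet
  rw [← hdet, det_eq_mul_det_submatrix_succ _ hcol]
  rfl

lemma prod_abs_le_of_linearIndependent_rat {d : ℕ} {y : Fin (d + 1) → Fin (d + 1) → ℤ}
    (hy : LinearIndependent ℚ fun k i => (y k i : ℚ)) {w : Fin d → Fin (d + 1) → ℤ}
    (hw : ∀ k, (fun i => (w k i : ℚ)) ∈
      Submodule.span ℚ ((fun k i => (y k i : ℚ)) '' Set.Iio k.succ))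
    {E : Fin d → ℝ} (hE : ∀ k i, |((leadingMinor (w k) (y k.succ) i : ℤ) : ℝ)| ≤ E k) :
    ∏ k, |(w k 0 : ℝ)| ≤ |(y 0 0 : ℝ)| * (d.factorial * ∏ k, E k) := by
  let Y : Matrix (Fin (d + 1)) (Fin (d + 1)) ℤ := .of y
  let M : Matrix (Fin d) (Fin d) ℤ := .of fun k => leadingMinor (w k) (y k.succ)
  have hdet : (∏ k, w k 0) * Y.det = y 0 0 * M.det := by
    have h := prod_mul_det_eq_mul_det_leadingMinor _ _ hw
    have hY : (Matrix.of fun k i => (y k i : ℚ)) = Y.map (Int.cast : ℤ → ℚ) := rfl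
    have hM : (Matrix.of fun k => leadingMinor (fun i => (w k i : ℚ)) fun i => (y k.succ i : ℚ)) =
        M.map (Int.cast : ℤ → ℚ) := by
      ext k i
      simp [M, leadingMinor]
    rw [hM, hY, ← Int.cast_det, ← Int.cast_det] at h
    exact_mod_cast h
  have hM : |(M.det : ℝ)| ≤ d.factorial * ∏ k, E k := by
    rw [Int.cast_det]
    simpa using abs_det_le_factorial_mul_prod (A := M.map (Int.cast : ℤ → ℝ)) hE
  have hY1 : (1 : ℝ) ≤ |(Y.det : ℝ)| := by
    exact_mod_cast one_le_abs_det_of_linearIndependent_rat hy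
  calc ∏ k, |(w k 0 : ℝ)| ≤ (∏ k, |(w k 0 : ℝ)|) * |(Y.det : ℝ)| :=
        le_mul_of_one_le_right (by positivity) hY1
    _ = |(y 0 0 : ℝ)| * |(M.det : ℝ)| := by
        rw [← Finset.abs_prod, ← abs_mul, ← abs_mul]
        exact_mod_cast congrArg abs hdet
    _ ≤ |(y 0 0 : ℝ)| * (d.factorial * ∏ k, E k) := by gcongr

end Determinants

lemma exists_strictMono_forall_lt_le {β : Type*} [LinearOrder β] (f : ℕ → β)
    (hf : ∀ n, ∃ m, f m < f n) :
    ∃ s : ℕ → ℕ, StrictMono s ∧ StrictAnti (f ∘ s) ∧ ∀ n, ∀ r < s (n + 1), f (s n) ≤ f r := by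
  classical
  let next (n : ℕ) : ℕ := Nat.find (hf n)
  have lt_next (n : ℕ) : f (next n) < f n := Nat.find_spec (hf n)
  have le_of_lt_next (n r : ℕ) (hr : r < next n) : f n ≤ f r := not_lt.mp (Nat.find_min (hf n) hr)
  let s (n : ℕ) : ℕ := next^[n] 0
  have s_succ (n : ℕ) : s (n + 1) = next (s n) := Function.iterate_succ_apply' next n 0
  have s_record (n : ℕ) : ∀ r < s n, f (s n) < f r := by
    cases n with
    | zero => exact fun r hr => absurd hr r.not_lt_zero
    | succ n =>
      rw [s_succ]
      exact fun r hr => (lt_next _).trans_le (le_of_lt_next _ r hr)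
  have f_succ_lt (n : ℕ) : f (s (n + 1)) < f (s n) := s_succ n ▸ lt_next (s n)
  refine ⟨s, strictMono_nat_of_lt_succ fun n => lt_of_not_ge fun hle => ?_,
    strictAnti_nat_of_succ_lt f_succ_lt, fun n r hr => le_of_lt_next _ r (s_succ n ▸ hr)⟩
  rcases hle.eq_or_lt with heq | hlt
  · exact (f_succ_lt n).ne (congrArg f heq)
  · exact (f_succ_lt n).not_gt (s_record n _ hlt)

section PowerSums

lemma sum_range_succ_pow_succ {R : Type*} [CommSemiring R] (α : R) (k : ℕ) :
    ∑ j ∈ Finset.range (k + 1), α ^ (j + 1) = α + α * ∑ j ∈ Finset.range k, α ^ (j + 1) := by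
  simp only [Finset.sum_range_succ', Finset.mul_sum, ← pow_succ', zero_add, pow_one, add_comm]

lemma half_lt_of_sum_range_pow_succ_eq_one {d : ℕ} {H : ℝ} (hH : 0 < H)
    (hroot : ∑ k ∈ Finset.range d, H ^ (k + 1) = 1) : 1 / 2 < H := by
  have hhalf (m : ℕ) : ∑ k ∈ Finset.range m, (1 / 2 : ℝ) ^ (k + 1) = 1 - (1 / 2) ^ m := by
    induction m with
    | zero => simp
    | succ m ih => rw [sum_range_succ_pow_succ, ih]; ring
  by_contra! hle
  have hsum : ∑ k ∈ Finset.range d, H ^ (k + 1) ≤ ∑ k ∈ Finset.range d, (1 / 2 : ℝ) ^ (k + 1) := by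
    gcongr
  rw [hroot, hhalf] at hsum
  linarith [pow_pos (one_half_pos (α := ℝ)) d]

lemma exists_mem_Ioo_forall_sum_range_pow_succ_le_one {d : ℕ} {H γ : ℝ} (hH : 0 < H)
    (hroot : ∑ k ∈ Finset.range d, H ^ (k + 1) = 1) (hγ : H < γ) :
    ∃ α ∈ Set.Ioo H γ, ∀ k < d, ∑ j ∈ Finset.range k, α ^ (j + 1) ≤ 1 := by
  have hlt (k : ℕ) (hk : k < d) : ∑ j ∈ Finset.range k, H ^ (j + 1) < 1 := by
    rw [← hroot]
    exact Finset.sum_lt_sum_of_subset (Finset.range_mono hk.le) (Finset.mem_range.mpr hk)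
      Finset.notMem_range_self (by positivity) fun j _ _ => by positivity
  have hev : ∀ᶠ α in nhds H, ∀ k ∈ Finset.range d, ∑ j ∈ Finset.range k, α ^ (j + 1) ≤ 1 := by
    rw [Filter.eventually_all_finset]
    intro k hk
    have hcont : Continuous fun α : ℝ => ∑ j ∈ Finset.range k, α ^ (j + 1) := by fun_prop
    exact (hcont.continuousAt.eventually_lt_const (hlt k (Finset.mem_range.mp hk))).mono
      fun _ => le_of_lt
  obtain ⟨α, hα, hmem⟩ :=
    ((hev.filter_mono nhdsWithin_le_nhds).and (Ioo_mem_nhdsGT hγ)).exists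
  exact ⟨α, hmem, fun k hk => hα k (Finset.mem_range.mpr hk)⟩

end PowerSums

section Growth

variable {α C : ℝ}

lemma rpow_mul_rpow_le_of_rpow_le {σ p p' r : ℝ} (hC : 1 ≤ C) (hσ : σ ∈ Set.Icc 0 1)
    (hp : 0 < p) (hp' : 0 < p') (hpr : p ≤ r) (hrp' : p' ^ α ≤ C * r) :
    p ^ (1 - σ) * p' ^ (1 - α) ≤ C * r * p' ^ (1 - (α + α * σ)) := by
  obtain ⟨hσ0, hσ1⟩ := hσ
  have hr : 0 < r := hp.trans_le hpr
  have hσ' : (p' ^ α) ^ σ ≤ C * r ^ σ :=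
    calc (p' ^ α) ^ σ ≤ (C * r) ^ σ := by gcongr
      _ = C ^ σ * r ^ σ := Real.mul_rpow (by positivity) hr.le
      _ ≤ C * r ^ σ := by
        gcongr
        simpa using Real.rpow_le_rpow_of_exponent_le hC hσ1
  calc p ^ (1 - σ) * p' ^ (1 - α)
      = p ^ (1 - σ) * ((p' ^ α) ^ σ * p' ^ (1 - (α + α * σ))) := by
        rw [← Real.rpow_mul hp'.le, ← Real.rpow_add hp']
        ring_nf
    _ ≤ r ^ (1 - σ) * (C * r ^ σ * p' ^ (1 - (α + α * σ))) := by
        have := sub_nonneg.mpr hσ1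
        gcongr
    _ = C * (r ^ (1 - σ) * r ^ σ) * p' ^ (1 - (α + α * σ)) := by ring
    _ = C * r * p' ^ (1 - (α + α * σ)) := by
        rw [← Real.rpow_add hr, sub_add_cancel, Real.rpow_one]

lemma mul_prod_rpow_le_of_rpow_le (hα : 0 ≤ α) (hC : 1 ≤ C) {d : ℕ} {p : Fin (d + 1) → ℝ}
    {r : Fin d → ℝ} (hσ : ∀ k < d, ∑ j ∈ Finset.range k, α ^ (j + 1) ≤ 1) (hp : ∀ k, 0 < p k)
    (hpr : ∀ k, p k.castSucc ≤ r k) (hrp : ∀ k, p k.succ ^ α ≤ C * r k) :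
    p 0 * ∏ k : Fin d, p k.succ ^ (1 - α) ≤
      C ^ d * (∏ k, r k) * p (Fin.last d) ^ (1 - ∑ j ∈ Finset.range d, α ^ (j + 1)) := by
  induction d with
  | zero => simp
  | succ d ih =>
    have hr (k) : 0 < r k := (hp _).trans_le (hpr k)
    have ih := ih (p := p ∘ Fin.castSucc) (r := r ∘ Fin.castSucc)
      (fun k hk => hσ k (by lia)) (fun k => hp _) (fun k => hpr _) (fun k => hrp k.castSucc)
    have hstep := rpow_mul_rpow_le_of_rpow_le hC
      ⟨Finset.sum_nonneg fun j _ => by positivity, hσ d d.lt_succ_self⟩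
      (hp _) (hp _) (hpr (Fin.last d)) (hrp (Fin.last d))
    simp only [Function.comp_apply, Fin.castSucc_zero] at ih
    rw [Fin.prod_univ_castSucc, Fin.prod_univ_castSucc, sum_range_succ_pow_succ, ← mul_assoc]
    set σ := ∑ j ∈ Finset.range d, α ^ (j + 1)
    calc p 0 * (∏ k : Fin d, p k.castSucc.succ ^ (1 - α)) * p (Fin.last d).succ ^ (1 - α)
        ≤ C ^ d * (∏ k : Fin d, r k.castSucc) * p (Fin.last d).castSucc ^ (1 - σ) *
            p (Fin.last d).succ ^ (1 - α) :=
          mul_le_mul_of_nonneg_right ih (Real.rpow_nonneg (hp _).le _)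
      _ = C ^ d * (∏ k : Fin d, r k.castSucc) *
            (p (Fin.last d).castSucc ^ (1 - σ) * p (Fin.last d).succ ^ (1 - α)) := by ring
      _ ≤ C ^ d * (∏ k : Fin d, r k.castSucc) *
            (C * r (Fin.last d) * p (Fin.last d).succ ^ (1 - (α + α * σ))) := by
          have := Finset.prod_nonneg fun k (_ : k ∈ Finset.univ) => (hr (Fin.castSucc k)).le
          gcongr
      _ = C ^ (d + 1) * ((∏ k : Fin d, r k.castSucc) * r (Fin.last d)) *
            p (Fin.last (d + 1)) ^ (1 - (α + α * σ)) := by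
          rw [Fin.succ_last]
          ring

end Growth

section Approximation

variable {d : ℕ} {ξ : Fin d → ℝ}

/-- The error vector of the integer point `x`, read as the approximation with denominator `x 0` and
numerators `x 1, …, x d`. Its norm is the sup norm of the paper's system of inequalities. -/
def approxError (ξ : Fin d → ℝ) (x : Fin (d + 1) → ℤ) : Fin d → ℝ :=
  fun j => x 0 * ξ j - x j.succ

lemma abs_approxError_le_norm (ξ : Fin d → ℝ) (x : Fin (d + 1) → ℤ) (j : Fin d) :
    |approxError ξ x j| ≤ ‖approxError ξ x‖ :=
  norm_le_pi_norm (approxError ξ x) j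

lemma leadingMinor_eq_mul_approxError_sub (ξ : Fin d → ℝ) (x y : Fin (d + 1) → ℤ) (i : Fin d) :
    ((leadingMinor x y i : ℤ) : ℝ) = y 0 * approxError ξ x i - x 0 * approxError ξ y i := by
  simp only [leadingMinor, approxError]
  push_cast
  ring

lemma abs_leadingMinor_le {x y : Fin (d + 1) → ℤ} (hx : 0 ≤ x 0) (hxy : x 0 ≤ y 0)
    (herr : ‖approxError ξ y‖ ≤ ‖approxError ξ x‖) (i : Fin d) :
    |((leadingMinor x y i : ℤ) : ℝ)| ≤ 2 * y 0 * ‖approxError ξ x‖ := by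
  have hx' : (0 : ℝ) ≤ x 0 := by exact_mod_cast hx
  have hxy' : (x 0 : ℝ) ≤ y 0 := by exact_mod_cast hxy
  have hy' : (0 : ℝ) ≤ y 0 := hx'.trans hxy'
  rw [leadingMinor_eq_mul_approxError_sub ξ]
  calc |y 0 * approxError ξ x i - x 0 * approxError ξ y i|
      ≤ |y 0 * approxError ξ x i| + |x 0 * approxError ξ y i| := abs_sub _ _
    _ = y 0 * |approxError ξ x i| + x 0 * |approxError ξ y i| := by
        rw [abs_mul, abs_mul, abs_of_nonneg hx', abs_of_nonneg hy']
    _ ≤ y 0 * ‖approxError ξ x‖ + y 0 * ‖approxError ξ x‖ := by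
        gcongr
        · exact abs_approxError_le_norm ξ x i
        · exact (abs_approxError_le_norm ξ y i).trans herr
    _ = 2 * y 0 * ‖approxError ξ x‖ := by ring

lemma TotallyIrrational.eq_zero_of_sum_eq_zero (hξ : TotallyIrrational ξ) {c : Fin (d + 1) → ℚ}
    (hc : (c 0 : ℝ) + ∑ i : Fin d, (c i.succ : ℝ) * ξ i = 0) : c = 0 := by
  refine funext (Fintype.linearIndependent_iff.mp hξ c ?_)
  simpa [Fin.sum_univ_succ, Rat.smul_def] using hc

lemma TotallyIrrational.approxError_ne_zero [NeZero d] (hξ : TotallyIrrational ξ)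
    {x : Fin (d + 1) → ℤ} (hx : x 0 ≠ 0) : approxError ξ x ≠ 0 := by
  intro h
  have h0 : x 0 * ξ 0 - x (Fin.succ 0) = 0 := congrFun h 0
  have hc := hξ.eq_zero_of_sum_eq_zero
    (c := Fin.cons (-(x (Fin.succ 0) : ℚ)) (Pi.single 0 (x 0 : ℚ))) <| by
      simp only [Fin.cons_zero, Fin.cons_succ]
      rw [Finset.sum_eq_single 0 (fun i _ hi => by simp [hi]) (by simp), Pi.single_eq_same]
      push_cast
      linear_combination h0
  have hx0 : (x 0 : ℚ) = 0 := by
    simpa only [Fin.cons_succ, Pi.single_eq_same, Pi.zero_apply] using congrFun hc (Fin.succ 0)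
  exact hx (by exact_mod_cast hx0)

lemma TotallyIrrational.eq_zero_of_forall_dotProduct_eq_zero (hξ : TotallyIrrational ξ)
    {x : ℕ → Fin (d + 1) → ℤ} (hx : Tendsto (fun n => (x n 0 : ℝ)) atTop atTop) {B : ℝ}
    (hB : ∀ n, ‖approxError ξ (x n)‖ ≤ B) {c : Fin (d + 1) → ℚ}
    (hc : ∀ n, c ⬝ᵥ (fun i => (x n i : ℚ)) = 0) : c = 0 := by
  set s : ℝ := c 0 + ∑ i : Fin d, (c i.succ : ℝ) * ξ i with hs
  have hmul (n : ℕ) : x n 0 * s = ∑ i : Fin d, (c i.succ : ℝ) * approxError ξ (x n) i := by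
    have hcn : (c 0 : ℝ) * x n 0 + ∑ i : Fin d, (c i.succ : ℝ) * x n i.succ = 0 := by
      have := hc n
      rw [dotProduct, Fin.sum_univ_succ] at this
      exact_mod_cast this
    simp only [approxError, mul_sub, Finset.sum_sub_distrib, hs, mul_left_comm _ (x n 0 : ℝ),
      ← Finset.mul_sum]
    linear_combination hcn
  have hbound (n : ℕ) : x n 0 * |s| ≤ ∑ i : Fin d, |(c i.succ : ℝ)| * B :=
    calc x n 0 * |s| ≤ |x n 0 * s| := by rw [abs_mul]; gcongr; exact le_abs_self _
      _ ≤ ∑ i : Fin d, |(c i.succ : ℝ) * approxError ξ (x n) i| := by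
          rw [hmul]; exact Finset.abs_sum_le_sum_abs _ _
      _ ≤ ∑ i : Fin d, |(c i.succ : ℝ)| * B := by
          gcongr with i
          rw [abs_mul]
          gcongr
          exact (abs_approxError_le_norm ξ (x n) i).trans (hB n)
  refine hξ.eq_zero_of_sum_eq_zero (by_contra fun hne => ?_)
  obtain ⟨n, hn⟩ := ((hx.atTop_mul_const (abs_pos.mpr hne)).eventually_gt_atTop _).exists
  exact (hbound n).not_gt hn

lemma TotallyIrrational.span_range_eq_top (hξ : TotallyIrrational ξ)
    {x : ℕ → Fin (d + 1) → ℤ} (hx : Tendsto (fun n => (x n 0 : ℝ)) atTop atTop) {B : ℝ}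
    (hB : ∀ n, ‖approxError ξ (x n)‖ ≤ B) :
    Submodule.span ℚ (Set.range fun n i => (x n i : ℚ)) = ⊤ := by
  by_contra hne
  obtain ⟨f, hf, hker⟩ := Submodule.exists_le_ker_of_lt_top _ (lt_top_iff_ne_top.mpr hne)
  obtain ⟨c, rfl⟩ := (dotProductEquiv ℚ (Fin (d + 1))).surjective f
  have hc : c = 0 := hξ.eq_zero_of_forall_dotProduct_eq_zero hx hB fun n =>
    hker (Submodule.subset_span (Set.mem_range_self n))
  exact hf (by rw [hc, map_zero])

end Approximation

section UniformApproximation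

variable {d : ℕ} {ξ : Fin d → ℝ} {γ : ℝ}

lemma UnifApprox.mono {α : ℝ} (h : UnifApprox ξ γ) (hα : α ≤ γ) : UnifApprox ξ α := by
  filter_upwards [h, eventually_ge_atTop 1] with Q ⟨q, a, hq, hqQ, ha⟩ hQ
  exact ⟨q, a, hq, hqQ, fun j => (ha j).trans_le
    (Real.rpow_le_rpow_of_exponent_le hQ (neg_le_neg hα))⟩

/-- The integer point with denominator `q` of least approximation error. -/
noncomputable def nearestPoint (ξ : Fin d → ℝ) (q : ℤ) : Fin (d + 1) → ℤ :=
  Fin.cons q fun j => round (q * ξ j)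

@[simp]
lemma nearestPoint_zero (ξ : Fin d → ℝ) (q : ℤ) : nearestPoint ξ q 0 = q := rfl

lemma norm_approxError_nearestPoint_le (ξ : Fin d → ℝ) (x : Fin (d + 1) → ℤ) :
    ‖approxError ξ (nearestPoint ξ (x 0))‖ ≤ ‖approxError ξ x‖ := by
  refine (pi_norm_le_iff_of_nonneg (norm_nonneg _)).mpr fun j => ?_
  calc ‖approxError ξ (nearestPoint ξ (x 0)) j‖ = |x 0 * ξ j - round (x 0 * ξ j)| := rfl
    _ ≤ |x 0 * ξ j - x j.succ| := round_le _ _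
    _ ≤ ‖approxError ξ x‖ := abs_approxError_le_norm ξ x j

lemma UnifApprox.eventually_exists_nearestPoint (h : UnifApprox ξ γ) :
    ∀ᶠ Q : ℝ in atTop, ∃ m : ℕ, (m + 1 : ℝ) ≤ Q ∧
      ‖approxError ξ (nearestPoint ξ (m + 1))‖ < Q ^ (-γ) := by
  filter_upwards [h, eventually_gt_atTop 0] with Q ⟨q, a, hq, hqQ, ha⟩ hQ
  obtain ⟨m, rfl⟩ : ∃ m : ℕ, q = m + 1 := ⟨(q - 1).toNat, by lia⟩
  refine ⟨m, by exact_mod_cast hqQ, ?_⟩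
  calc ‖approxError ξ (nearestPoint ξ (m + 1))‖
      ≤ ‖approxError ξ (Fin.cons (m + 1 : ℤ) a)‖ :=
        norm_approxError_nearestPoint_le ξ (Fin.cons (m + 1 : ℤ) a)
    _ < Q ^ (-γ) := (pi_norm_lt_iff (Real.rpow_pos_of_pos hQ _)).mpr ha

/-- A sequence of integer points with positive, increasing denominators and decreasing errors,
the two monotonicity properties of the sequence of best approximations to `ξ`. -/
structure IsImprovingSeq (ξ : Fin d → ℝ) (x : ℕ → Fin (d + 1) → ℤ) : Prop where
  pos : ∀ n, 0 < x n 0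
  strictMono : StrictMono fun n => x n 0
  strictAnti : StrictAnti fun n => ‖approxError ξ (x n)‖

lemma UnifApprox.exists_isImprovingSeq [NeZero d] (h : UnifApprox ξ γ) (hγ : 0 < γ)
    (hξ : TotallyIrrational ξ) :
    ∃ x, IsImprovingSeq ξ x ∧
      ∀ᶠ n in atTop, ‖approxError ξ (x n)‖ ≤ (x (n + 1) 0 : ℝ) ^ (-γ) := by
  have h := h.eventually_exists_nearestPoint
  let f (m : ℕ) : ℝ := ‖approxError ξ (nearestPoint ξ (m + 1))‖
  have hf (n : ℕ) : ∃ m, f m < f n := by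
    have hpos : 0 < f n :=
      norm_pos_iff.mpr (hξ.approxError_ne_zero (by rw [nearestPoint_zero]; lia))
    obtain ⟨Q, ⟨m, -, hm⟩, hQ⟩ :=
      (h.and ((tendsto_rpow_neg_atTop hγ).eventually_lt_const hpos)).exists
    exact ⟨m, hm.trans hQ⟩
  obtain ⟨s, hs, hfs, hmin⟩ := exists_strictMono_forall_lt_le f hf
  refine ⟨fun n => nearestPoint ξ (s n + 1),
    ⟨fun n => by rw [nearestPoint_zero]; lia, fun m n hmn => by simpa using hs hmn, hfs⟩, ?_⟩
  obtain ⟨Q₀, hQ₀⟩ := eventually_atTop.mp h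
  have hlarge : Tendsto (fun n => (s (n + 1) + 1 : ℝ)) atTop atTop :=
    tendsto_atTop_add_const_right _ _ <| tendsto_natCast_atTop_atTop.comp <|
      hs.tendsto_atTop.comp (tendsto_add_atTop_nat 1)
  filter_upwards [hlarge.eventually_gt_atTop Q₀] with n hn
  have hne : (s (n + 1) + 1 : ℝ) ≠ 0 := by positivity
  -- A solution for `Q` just below the next denominator has an earlier one; let `Q` increase.
  have hlim : Tendsto (fun Q : ℝ => Q ^ (-γ))
      (nhdsWithin (s (n + 1) + 1) (Set.Iio (s (n + 1) + 1)))
      (nhds ((s (n + 1) + 1 : ℝ) ^ (-γ))) :=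
    (Real.continuousAt_rpow_const _ _ (.inl hne)).tendsto.mono_left nhdsWithin_le_nhds
  have hle : f (s n) ≤ (s (n + 1) + 1 : ℝ) ^ (-γ) := by
    refine ge_of_tendsto hlim ?_
    filter_upwards [Ioo_mem_nhdsLT hn] with Q ⟨hQ, hQs⟩
    obtain ⟨m, hmQ, hm⟩ := hQ₀ Q hQ.le
    have hms : m < s (n + 1) := by
      have := hmQ.trans_lt hQs
      exact_mod_cast lt_of_add_lt_add_right this
    exact (hmin n m hms).trans hm.le
  simpa [f] using hle

namespace IsImprovingSeq

variable {x : ℕ → Fin (d + 1) → ℤ}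

lemma cast_pos (hx : IsImprovingSeq ξ x) (n : ℕ) : (0 : ℝ) < x n 0 := by exact_mod_cast hx.pos n

lemma tail (hx : IsImprovingSeq ξ x) (n : ℕ) : IsImprovingSeq ξ fun m => x (m + n) where
  pos _ := hx.pos _
  strictMono := hx.strictMono.comp (strictMono_id.add_const n)
  strictAnti := hx.strictAnti.comp_strictMono (strictMono_id.add_const n)

lemma tendsto_atTop (hx : IsImprovingSeq ξ x) : Tendsto (fun n => (x n 0 : ℝ)) atTop atTop := by
  have hle (n : ℕ) : (n : ℤ) ≤ x n 0 := by
    induction n with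
    | zero => exact (hx.pos 0).le
    | succ n ih => exact_mod_cast ih.trans_lt (hx.strictMono n.lt_succ_self)
  exact tendsto_atTop_mono (fun n => by exact_mod_cast hle n) tendsto_natCast_atTop_atTop

lemma exists_strictMono_prod_le (hx : IsImprovingSeq ξ x) (hξ : TotallyIrrational ξ) {α : ℝ}
    (herr : ∀ n, ‖approxError ξ (x n)‖ ≤ (x (n + 1) 0 : ℝ) ^ (-α)) :
    ∃ e : Fin (d + 1) → ℕ, StrictMono e ∧
      ∏ k : Fin d, (x (e k.succ - 1) 0 : ℝ) ≤
        d.factorial * 2 ^ d * (x (e 0) 0 * ∏ k : Fin d, (x (e k.succ) 0 : ℝ) ^ (1 - α)) := by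
  have hspan := hξ.span_range_eq_top hx.tendsto_atTop
    (fun n => hx.strictAnti.antitone n.zero_le)
  obtain ⟨e, he, hindep, hmem⟩ :=
    exists_strictMono_linearIndependent_forall_lt_mem_span (Module.finrank_fin_fun ℚ) hspan
  refine ⟨e, he, ?_⟩
  have hsucc (k : Fin d) : e k.succ - 1 + 1 = e k.succ :=
    Nat.sub_add_cancel ((Nat.zero_le _).trans_lt (he k.succ_pos))
  have hpred (k : Fin d) : e k.succ - 1 < e k.succ := Nat.lt_of_succ_le (hsucc k).le
  have hminor (k i : Fin d) :
      |((leadingMinor (x (e k.succ - 1)) (x (e k.succ)) i : ℤ) : ℝ)| ≤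
        2 * (x (e k.succ) 0 : ℝ) ^ (1 - α) := by
    have hpos := hx.cast_pos (e k.succ)
    have herr_k := herr (e k.succ - 1)
    rw [hsucc] at herr_k
    calc |((leadingMinor (x (e k.succ - 1)) (x (e k.succ)) i : ℤ) : ℝ)|
        ≤ 2 * x (e k.succ) 0 * ‖approxError ξ (x (e k.succ - 1))‖ :=
          abs_leadingMinor_le (hx.pos _).le (hx.strictMono.monotone (hpred k).le)
            (hx.strictAnti.antitone (hpred k).le) i
      _ ≤ 2 * x (e k.succ) 0 * (x (e k.succ) 0 : ℝ) ^ (-α) := by gcongr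
      _ = 2 * (x (e k.succ) 0 : ℝ) ^ (1 - α) := by
          rw [sub_eq_add_neg, Real.rpow_add hpos, Real.rpow_one, mul_assoc]
  have hprod := prod_abs_le_of_linearIndependent_rat (y := fun k => x (e k)) hindep
    (w := fun k => x (e k.succ - 1)) (fun k => hmem _ _ (hpred k)) hminor
  simp only [abs_of_pos (hx.cast_pos _), Finset.prod_mul_distrib, Finset.prod_const,
    Finset.card_univ, Fintype.card_fin] at hprod
  linarith

lemma one_le_mul_rpow (hx : IsImprovingSeq ξ x) (hξ : TotallyIrrational ξ) {α C : ℝ} (hα : 0 ≤ α)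
    (hC : 1 ≤ C) (hσ : ∀ k < d, ∑ j ∈ Finset.range k, α ^ (j + 1) ≤ 1)
    (hσd : 1 ≤ ∑ j ∈ Finset.range d, α ^ (j + 1))
    (herr : ∀ n, ‖approxError ξ (x n)‖ ≤ (x (n + 1) 0 : ℝ) ^ (-α))
    (hratio : ∀ n, (x (n + 1) 0 : ℝ) ^ α ≤ C * x n 0) :
    1 ≤ d.factorial * 2 ^ d * C ^ d *
      (x 0 0 : ℝ) ^ (1 - ∑ j ∈ Finset.range d, α ^ (j + 1)) := by
  obtain ⟨e, he, hdet⟩ := hx.exists_strictMono_prod_le hξ herr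
  have hsucc (k : Fin d) : e k.succ - 1 + 1 = e k.succ :=
    Nat.sub_add_cancel ((Nat.zero_le _).trans_lt (he k.succ_pos))
  have hgrowth := mul_prod_rpow_le_of_rpow_le hα hC (p := fun k => (x (e k) 0 : ℝ))
    (r := fun k => (x (e k.succ - 1) 0 : ℝ)) hσ (fun k => hx.cast_pos _)
    (fun k => Int.cast_le.mpr <|
      hx.strictMono.monotone (Nat.le_sub_one_of_lt (he k.castSucc_lt_succ)))
    (fun k => by simpa only [hsucc] using hratio (e k.succ - 1))
  set σ := ∑ j ∈ Finset.range d, α ^ (j + 1)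
  have hlast : (x (e (Fin.last d)) 0 : ℝ) ^ (1 - σ) ≤ (x 0 0 : ℝ) ^ (1 - σ) :=
    Real.rpow_le_rpow_of_nonpos (hx.cast_pos 0)
      (Int.cast_le.mpr (hx.strictMono.monotone (Nat.zero_le _))) (sub_nonpos.mpr hσd)
  set P : ℝ := ∏ k : Fin d, (x (e k.succ - 1) 0 : ℝ)
  have hP : 0 < P := Finset.prod_pos fun k _ => hx.cast_pos _
  refine le_of_mul_le_mul_right ?_ hP
  calc 1 * P
      ≤ d.factorial * 2 ^ d * (x (e 0) 0 * ∏ k : Fin d, (x (e k.succ) 0 : ℝ) ^ (1 - α)) := by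
        rwa [one_mul]
    _ ≤ d.factorial * 2 ^ d * (C ^ d * P * (x (e (Fin.last d)) 0 : ℝ) ^ (1 - σ)) :=
        mul_le_mul_of_nonneg_left hgrowth (by positivity)
    _ ≤ d.factorial * 2 ^ d * (C ^ d * P * (x 0 0 : ℝ) ^ (1 - σ)) :=
        mul_le_mul_of_nonneg_left (mul_le_mul_of_nonneg_left hlast (by positivity)) (by positivity)
    _ = d.factorial * 2 ^ d * C ^ d * (x 0 0 : ℝ) ^ (1 - σ) * P := by ring

end IsImprovingSeq

end UniformApproximation

section Sphere

variable {d : ℕ} {ξ : Fin d → ℝ}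

/-- The quadratic form whose zero cone consists of the integer points `x` such that the rational
point `(x 1 / x 0, …, x d / x 0)` lies on the unit sphere. -/
def sphereForm (x : Fin (d + 1) → ℤ) : ℤ := ∑ i : Fin d, x i.succ ^ 2 - x 0 ^ 2

lemma sphereForm_eq_sum_approxError (hsphere : ∑ i, ξ i ^ 2 = 1) (x : Fin (d + 1) → ℤ) :
    (sphereForm x : ℝ) = ∑ i, (approxError ξ x i ^ 2 - 2 * x 0 * ξ i * approxError ξ x i) :=
  calc (sphereForm x : ℝ) = ∑ i : Fin d, (x i.succ : ℝ) ^ 2 - x 0 ^ 2 * ∑ i, ξ i ^ 2 := by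
        simp [sphereForm, hsphere]
    _ = ∑ i, (approxError ξ x i ^ 2 - 2 * x 0 * ξ i * approxError ξ x i) := by
        rw [Finset.mul_sum, ← Finset.sum_sub_distrib]
        refine Finset.sum_congr rfl fun i _ => ?_
        rw [approxError]
        ring

lemma abs_sphereForm_le (hsphere : ∑ i, ξ i ^ 2 = 1) {x : Fin (d + 1) → ℤ} (hpos : 0 < x 0)
    (herr : ‖approxError ξ x‖ ≤ 1) :
    |(sphereForm x : ℝ)| ≤ 3 * d * x 0 * ‖approxError ξ x‖ := by
  have hq : (1 : ℝ) ≤ x 0 := by exact_mod_cast hpos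
  have hξ (i : Fin d) : |ξ i| ≤ 1 := by
    rw [← sq_le_one_iff_abs_le_one, ← hsphere]
    exact Finset.single_le_sum (fun j _ => sq_nonneg (ξ j)) (Finset.mem_univ i)
  have hterm (i : Fin d) : |approxError ξ x i ^ 2 - 2 * x 0 * ξ i * approxError ξ x i| ≤
      3 * x 0 * ‖approxError ξ x‖ := by
    have herr_i := abs_approxError_le_norm ξ x i
    calc |approxError ξ x i ^ 2 - 2 * x 0 * ξ i * approxError ξ x i|
        ≤ |approxError ξ x i| * |approxError ξ x i| +
            2 * x 0 * |ξ i| * |approxError ξ x i| := by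
          refine (abs_sub _ _).trans_eq ?_
          rw [abs_mul, abs_mul, abs_of_nonneg (by positivity : (0 : ℝ) ≤ 2 * x 0), abs_pow, sq]
      _ ≤ x 0 * ‖approxError ξ x‖ + 2 * x 0 * 1 * ‖approxError ξ x‖ := by
          gcongr
          exacts [(herr_i.trans herr).trans hq, hξ i]
      _ = 3 * x 0 * ‖approxError ξ x‖ := by ring
  calc |(sphereForm x : ℝ)|
      ≤ ∑ i, |approxError ξ x i ^ 2 - 2 * x 0 * ξ i * approxError ξ x i| := by
        rw [sphereForm_eq_sum_approxError hsphere]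
        exact Finset.abs_sum_le_sum_abs _ _
    _ ≤ ∑ _i : Fin d, 3 * x 0 * ‖approxError ξ x‖ := Finset.sum_le_sum fun i _ => hterm i
    _ = 3 * d * x 0 * ‖approxError ξ x‖ := by
        simp only [Finset.sum_const, Finset.card_univ, Fintype.card_fin, nsmul_eq_mul]
        ring

lemma dvd_sum_leadingMinor_sq (x : Fin (d + 1) → ℤ) {y : Fin (d + 1) → ℤ}
    (hy : sphereForm y = 0) : y 0 ∣ ∑ i, leadingMinor x y i ^ 2 := by
  have hcone : ∑ i : Fin d, y i.succ ^ 2 = y 0 ^ 2 := sub_eq_zero.mp hy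
  have hexpand : ∑ i, leadingMinor x y i ^ 2 = x 0 ^ 2 * ∑ i : Fin d, y i.succ ^ 2 +
      y 0 * ∑ i : Fin d, (y 0 * x i.succ ^ 2 - 2 * x 0 * y i.succ * x i.succ) := by
    simp only [leadingMinor, Finset.mul_sum, ← Finset.sum_add_distrib]
    exact Finset.sum_congr rfl fun i _ => by ring
  rw [hexpand, hcone]
  exact dvd_add (dvd_mul_of_dvd_right (dvd_pow_self _ two_ne_zero) _) (dvd_mul_right _ _)

lemma sum_leadingMinor_sq_pos {x y : Fin (d + 1) → ℤ} (hpos : 0 < y 0) (hxy : |x 0| ≤ y 0)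
    (herr : ‖approxError ξ y‖ < ‖approxError ξ x‖) : 0 < ∑ i, leadingMinor x y i ^ 2 := by
  have hy : (0 : ℝ) < y 0 := by exact_mod_cast hpos
  have hxy' : |(x 0 : ℝ)| ≤ y 0 := by exact_mod_cast hxy
  refine (Finset.sum_nonneg fun i _ => sq_nonneg _).lt_of_ne' fun hzero => ?_
  have hprop : (y 0 : ℝ) • approxError ξ x = (x 0 : ℝ) • approxError ξ y := by
    ext i
    have hi : leadingMinor x y i = 0 := by
      simpa using (Finset.sum_eq_zero_iff_of_nonneg fun i _ => sq_nonneg _).mp hzero i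
    have hi' := leadingMinor_eq_mul_approxError_sub ξ x y i
    rw [hi, Int.cast_zero] at hi'
    simpa using sub_eq_zero.mp hi'.symm
  have hnorm := congrArg norm hprop
  rw [norm_smul, norm_smul, Real.norm_of_nonneg hy.le, Real.norm_eq_abs] at hnorm
  have : |(x 0 : ℝ)| * ‖approxError ξ y‖ ≤ y 0 * ‖approxError ξ y‖ := by gcongr
  exact (mul_lt_mul_of_pos_left herr hy).not_ge (hnorm.trans_le this)

lemma one_le_of_sphereForm_eq_zero {x y : Fin (d + 1) → ℤ} (hx : 0 < x 0) (hxy : x 0 ≤ y 0)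
    (herr : ‖approxError ξ y‖ < ‖approxError ξ x‖) (hy : sphereForm y = 0) :
    1 ≤ 4 * d * y 0 * ‖approxError ξ x‖ ^ 2 := by
  have hpos : 0 < y 0 := hx.trans_le hxy
  have hpos' : (0 : ℝ) < y 0 := by exact_mod_cast hpos
  have hlower : (y 0 : ℝ) ≤ ∑ i, ((leadingMinor x y i : ℤ) : ℝ) ^ 2 := by
    exact_mod_cast Int.le_of_dvd
      (sum_leadingMinor_sq_pos hpos ((abs_of_pos hx).trans_le hxy) herr)
      (dvd_sum_leadingMinor_sq x hy)
  have hupper : ∑ i, ((leadingMinor x y i : ℤ) : ℝ) ^ 2 ≤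
      ∑ _i : Fin d, (2 * y 0 * ‖approxError ξ x‖) ^ 2 := by
    refine Finset.sum_le_sum fun i _ => ?_
    rw [← sq_abs]
    gcongr
    exact abs_leadingMinor_le hx.le hxy herr.le i
  refine le_of_mul_le_mul_right ?_ hpos'
  calc 1 * (y 0 : ℝ) ≤ ∑ _i : Fin d, (2 * y 0 * ‖approxError ξ x‖) ^ 2 := by
        rw [one_mul]
        exact hlower.trans hupper
    _ = 4 * d * y 0 * ‖approxError ξ x‖ ^ 2 * y 0 := by
        simp only [Finset.sum_const, Finset.card_univ, Fintype.card_fin, nsmul_eq_mul]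
        ring

namespace IsImprovingSeq

variable {x : ℕ → Fin (d + 1) → ℤ} {α : ℝ}

lemma tendsto_mul_rpow (hx : IsImprovingSeq ξ x) (C : ℝ) {β : ℝ} (hβ : β < 0) :
    Tendsto (fun n => C * (x n 0 : ℝ) ^ β) atTop (nhds 0) := by
  have h := (tendsto_rpow_neg_atTop (neg_pos.mpr hβ)).comp hx.tendsto_atTop
  simpa using h.const_mul C

lemma eventually_sphereForm_ne_zero (hx : IsImprovingSeq ξ x) (hα : 1 / 2 < α)
    (herr : ∀ᶠ n in atTop, ‖approxError ξ (x n)‖ ≤ (x (n + 1) 0 : ℝ) ^ (-α)) :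
    ∀ᶠ n in atTop, sphereForm (x n) ≠ 0 := by
  rw [← map_add_atTop_eq_nat 1, eventually_map]
  have hsmall := ((hx.tendsto_mul_rpow (4 * d) (β := 1 - 2 * α) (by linarith)).comp
    (tendsto_add_atTop_nat 1)).eventually_lt_const one_pos
  filter_upwards [herr, hsmall] with n herr_n hsmall_n hzero
  have hpos := hx.cast_pos (n + 1)
  refine hsmall_n.not_ge ?_
  calc 1 ≤ 4 * d * x (n + 1) 0 * ‖approxError ξ (x n)‖ ^ 2 :=
        one_le_of_sphereForm_eq_zero (hx.pos n) (hx.strictMono n.lt_succ_self).le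
          (hx.strictAnti n.lt_succ_self) hzero
    _ ≤ 4 * d * x (n + 1) 0 * ((x (n + 1) 0 : ℝ) ^ (-α)) ^ 2 := by gcongr
    _ = 4 * d * (x (n + 1) 0 : ℝ) ^ (1 - 2 * α) := by
        have hexp : 1 - 2 * α = 1 + -α * (2 : ℕ) := by push_cast; ring
        rw [hexp, Real.rpow_add hpos, Real.rpow_one, Real.rpow_mul_natCast hpos.le, mul_assoc]

lemma eventually_rpow_le (hx : IsImprovingSeq ξ x) (hsphere : ∑ i, ξ i ^ 2 = 1) (hα : 1 / 2 < α)
    (herr : ∀ᶠ n in atTop, ‖approxError ξ (x n)‖ ≤ (x (n + 1) 0 : ℝ) ^ (-α)) :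
    ∀ᶠ n in atTop, (x (n + 1) 0 : ℝ) ^ α ≤ 3 * d * x n 0 := by
  filter_upwards [herr, hx.eventually_sphereForm_ne_zero hα herr] with n herr_n hne
  have hpos := hx.cast_pos n
  have hpos' := hx.cast_pos (n + 1)
  have herr_one : ‖approxError ξ (x n)‖ ≤ 1 :=
    herr_n.trans (Real.rpow_le_one_of_one_le_of_nonpos (by exact_mod_cast hx.pos (n + 1))
      (by linarith))
  have hone : 1 ≤ 3 * d * x n 0 * (x (n + 1) 0 : ℝ) ^ (-α) :=
    calc (1 : ℝ) ≤ |(sphereForm (x n) : ℝ)| := by exact_mod_cast Int.one_le_abs hne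
      _ ≤ 3 * d * x n 0 * ‖approxError ξ (x n)‖ := abs_sphereForm_le hsphere (hx.pos n) herr_one
      _ ≤ 3 * d * x n 0 * (x (n + 1) 0 : ℝ) ^ (-α) := by gcongr
  rwa [Real.rpow_neg hpos'.le, ← div_eq_mul_inv, one_le_div (by positivity)] at hone

end IsImprovingSeq

lemma TotallyIrrational.not_unifApprox (hξ : TotallyIrrational ξ)
    (hsphere : ∑ i, ξ i ^ 2 = 1) {α : ℝ} (hα : 1 / 2 < α)
    (hσ : ∀ k < d, ∑ j ∈ Finset.range k, α ^ (j + 1) ≤ 1)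
    (hσd : 1 < ∑ j ∈ Finset.range d, α ^ (j + 1)) : ¬ UnifApprox ξ α := by
  intro h
  have : NeZero d := ⟨by rintro rfl; simp at hsphere⟩
  have hα0 : 0 < α := by linarith
  obtain ⟨x, hx, herr⟩ := h.exists_isImprovingSeq hα0 hξ
  have hC : (1 : ℝ) ≤ 3 * d := by
    exact_mod_cast Nat.one_le_iff_ne_zero.mpr (mul_ne_zero three_ne_zero (NeZero.ne d))
  have hsmall := (hx.tendsto_mul_rpow (d.factorial * 2 ^ d * (3 * d) ^ d)
    (sub_neg.mpr hσd)).eventually_lt_const one_pos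
  obtain ⟨N, hN⟩ := eventually_atTop.mp (herr.and (hx.eventually_rpow_le hsphere hα herr))
  obtain ⟨n, hlt, hn⟩ := (hsmall.and (eventually_ge_atTop N)).exists
  have hge := (hx.tail n).one_le_mul_rpow hξ hα0.le hC hσ hσd.le
    (fun m => by simpa only [add_right_comm] using (hN (m + n) (by lia)).1)
    (fun m => by simpa only [add_right_comm] using (hN (m + n) (by lia)).2)
  rw [zero_add] at hge
  exact hlt.not_ge hge

end Sphere

/-- Theorem 2: if `ξ ∈ ℝ^d` (`d ≥ 2`) is totally irrational and lies on the unit sphere,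
then `ω̂(ξ) ≤ H_{d-1}`, where `H_{d-1}` is the unique positive root of `x^d+⋯+x = 1`. -/
theorem uniform_exponent_le_of_on_sphere
    (d : ℕ) (hd : 2 ≤ d) (ξ : Fin d → ℝ)
    (hirr : TotallyIrrational ξ)
    (hsphere : ∑ i, ξ i ^ 2 = 1)
    (H : ℝ) (hHpos : 0 < H)
    (hHroot : ∑ k ∈ Finset.range d, H ^ (k + 1) = 1) :
    ∀ γ : ℝ, UnifApprox ξ γ → γ ≤ H := by
  intro γ hγ
  by_contra! hlt
  obtain ⟨α, ⟨hHα, hαγ⟩, hσ⟩ := exists_mem_Ioo_forall_sum_range_pow_succ_le_one hHpos hHroot hlt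
  have hα : 1 / 2 < α := (half_lt_of_sum_range_pow_succ_eq_one hHpos hHroot).trans hHα
  have hσd : 1 < ∑ j ∈ Finset.range d, α ^ (j + 1) := by
    rw [← hHroot]
    exact Finset.sum_lt_sum_of_nonempty (Finset.nonempty_range_iff.mpr (by lia))
      fun k _ => pow_lt_pow_left₀ hHα hHpos.le k.succ_ne_zero
  exact hirr.not_unifApprox hsphere hα hσ hσd (hγ.mono hαγ.le)
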